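/- arXiv:2510.27387 — 2 statements merged into one kernel-verified Lean document; each statement's English description precedes it below -/
import Mathlib

section
/- Let K be an algebraically closed field, let V and W be finite-dimensional vector spaces over K with m := dim V, and let F : V^d → W be a nonzero symmetric multilinear map. Then m ≤ PR(T_F)·C(α_S(F) + d - 1, d-1) + α_S(F), where C(a,b) denotes the binomial coefficient 'a choose b'. -/
/-!
The idea is to build an isotropic subspace greedily, one basis vector at a time.

Write `F = ∑ⱼ fⱼ(v|_{Eⱼ}) • Gⱼ(v|_{Eⱼᶜ})` with `r = PR(T_F)` terms. Call linearly independent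
vectors `u₀, …, u_{s-1}` *good* if every `fⱼ` vanishes on `u ∘ i` for every **monotone**
`i : Eⱼ → Fin s`. Then `F (u ∘ i) = 0` for monotone `i : Fin d → Fin s`, and since `F` is symmetric,
any tuple of members of `u` can be sorted, so `F` vanishes on the span of `u` (`eq_zero_on_span`). Hence a
good family has at most `α_S(F)` members.

A good family of size `s` extends by a vector `x` as soon as `fⱼ (u' ∘ i) = 0` for all `j` and all
monotone `i : Eⱼ → Fin (s + 1)` that attain the value `s`, where `u' = (u, x)`. There are at most
`r * C(s + d - 1, d - 1)` such conditions (`card_monotone_le`); each is a polynomial equation in the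
coordinates of `x` that holds at `x = 0`. Letting `x` range over a complement of the span of `u`, of
dimension `dim V - s`, Krull's height theorem and the Nullstellensatz give a nonzero solution as soon
as `dim V - s` exceeds the number of equations (`exists_ne_zero_common_zero`,
`exists_extension`). So for a good family of maximal size `s`,
`dim V ≤ r * C(s + d - 1, d - 1) + s`, and the right side is monotone in `s ≤ α_S(F)`.
-/

open Module

section Defs

variable {K : Type} [Field K] {d : ℕ} {V : Fin d → Type} {W : Type}
  [∀ i, AddCommGroup (V i)] [∀ i, Module K (V i)]
  [AddCommGroup W] [Module K W]

/-- `F : V₁ × ⋯ × V_d → W` corresponds (under the canonical isomorphism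
`Hom(V₁ × ⋯ × V_d, W) ≅ V₁* ⊗ ⋯ ⊗ V_d* ⊗ W`) to a tensor `T_F` of partition rank one:
the tensor factors, along a nontrivial partition of the `d+1` factors, as `S₁ ⊗ S₂`.
Equivalently (for finite-dimensional spaces), there is a nonempty set `E` of input indices
such that `F v = f (v|_E) • G (v|_{Eᶜ})` for a multilinear form `f` on the `E`-coordinates
and a multilinear map `G` on the remaining coordinates. -/
def IsPartitionRankOneMap (F : MultilinearMap K V W) : Prop :=
  ∃ E : Finset (Fin d), E.Nonempty ∧
    ∃ (f : MultilinearMap K (fun i : ↥E => V i.val) K)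
      (G : MultilinearMap K (fun i : ↥(Eᶜ : Finset (Fin d)) => V i.val) W),
      ∀ v : ∀ i, V i, F v = f (fun i => v i.val) • G (fun i => v i.val)

/-- The partition rank `PR(T_F)` of the tensor `T_F ∈ V₁* ⊗ ⋯ ⊗ V_d* ⊗ W` corresponding to a
multilinear map `F`. -/
noncomputable def mapPartitionRank (F : MultilinearMap K V W) : ℕ :=
  sInf {r : ℕ | ∃ c : Fin r → MultilinearMap K V W,
    (∀ j, IsPartitionRankOneMap (c j)) ∧ F = ∑ j, c j}

variable {V₀ : Type} [AddCommGroup V₀] [Module K V₀]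

/-- A multilinear map `F : V^d → W` is symmetric if it is invariant under all permutations
of its arguments. -/
def IsSymmetricMap (F : MultilinearMap K (fun _ : Fin d => V₀) W) : Prop :=
  ∀ (e : Equiv.Perm (Fin d)) (v : Fin d → V₀), F (v ∘ e) = F v

/-- The isotropy index `α_S(F)` (resp. `α_Λ(F)`) of a multilinear map `F : V^d → W`:
the largest dimension of a subspace `U ⊆ V` such that `F` vanishes identically on `U^d`. -/
noncomputable def vanIndex (F : MultilinearMap K (fun _ : Fin d => V₀) W) : ℕ :=
  sSup {s : ℕ | ∃ U : Submodule K V₀, Module.finrank K U = s ∧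
    ∀ v : Fin d → V₀, (∀ i, v i ∈ U) → F v = 0}

end Defs

/-- Fewer than `n` polynomials in `n` variables over an algebraically closed field that vanish at
the origin have another common zero. Otherwise, for each point `a`, the polynomials translated to `a`
have `a` as their only common zero, so by Krull's height theorem the maximal ideal of `a` has height
at most the number of polynomials; as every maximal ideal is of this form, this contradicts
`dim K[X₁, …, Xₙ] = n`. -/
lemma exists_ne_zero_common_zero {K : Type*} [Field K] [IsAlgClosed K] {n : ℕ} {ι : Type*}
    [Fintype ι] (p : ι → MvPolynomial (Fin n) K) (h0 : ∀ k, MvPolynomial.eval 0 (p k) = 0)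
    (hc : Fintype.card ι < n) :
    ∃ t : Fin n → K, t ≠ 0 ∧ ∀ k, MvPolynomial.eval t (p k) = 0 := by
  open MvPolynomial in
  by_contra! H
  have hdim : ringKrullDim (MvPolynomial (Fin n) K) ≤ (Fintype.card ι : ℕ) := by
    rw [ringKrullDim_le_iff_isMaximal_height_le]
    intro m hm
    obtain ⟨a, rfl⟩ := (isMaximal_iff_eq_vanishingIdeal_singleton).1 hm
    -- the polynomials translated so that the origin moves to `a`
    let q : ι → MvPolynomial (Fin n) K := fun k => aeval (fun i => X i - C (a i)) (p k)
    have hq : ∀ k x, aeval x (q k) = eval (x - a) (p k) := by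
      intro k x
      simp only [q, ← AlgHom.comp_apply, comp_aeval, aeval_eq_eval]
      simp [Pi.sub_def]
    have hz : zeroLocus K (Ideal.span (Set.range q)) = {a} := by
      rw [zeroLocus_span]
      ext x
      simp only [Set.mem_range, forall_exists_index, forall_apply_eq_imp_iff, hq,
        Set.mem_ofPred_eq, Set.mem_singleton_iff]
      constructor
      · intro hx
        by_contra hne
        obtain ⟨k, hk⟩ := H (x - a) (sub_ne_zero.2 hne)
        exact hk (hx k)
      · rintro rfl k
        simpa using h0 k
    have hrad := vanishingIdeal_zeroLocus_eq_radical (K := K) (Ideal.span (Set.range q))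
    rw [hz] at hrad
    have hmin : vanishingIdeal K {a} ∈ (Ideal.span (Set.range q)).minimalPrimes := by
      rw [← Ideal.radical_minimalPrimes, ← hrad, Ideal.minimalPrimes_eq_subsingleton_self]
      rfl
    have h1 := Ideal.height_le_card_of_mem_minimalPrimes_span (Set.finite_range q) hmin
    have h2 : (Set.range q).ncard ≤ Fintype.card ι := by
      rw [← Set.image_univ, ← Nat.card_eq_fintype_card, ← Set.ncard_univ]
      exact Set.ncard_image_le
    have h3 : (vanishingIdeal K {a}).height ≤ (Fintype.card ι : ℕ∞) :=
      h1.trans (by exact_mod_cast h2)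
    exact_mod_cast h3
  rw [MvPolynomial.ringKrullDim_of_isNoetherianRing, ringKrullDim_eq_zero_of_field] at hdim
  simp only [Nat.card_eq_fintype_card, Fintype.card_fin, zero_add] at hdim
  have : n ≤ Fintype.card ι := by exact_mod_cast hdim
  omega

/-- A multilinear form evaluated at vectors depending affinely on `t` is a polynomial in `t`. -/
lemma exists_polynomial_of_affine {K V κ ι : Type*} [Field K] [AddCommGroup V] [Module K V]
    [Fintype κ] [Fintype ι] (f : MultilinearMap K (fun _ : ι => V) K)
    (a : ι → V) (b : ι → κ → V) :
    ∃ p : MvPolynomial κ K, ∀ t : κ → K,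
      MvPolynomial.eval t p = f (fun e => a e + ∑ k, t k • b e k) := by
  classical
  refine ⟨∑ r : ι → Option κ, (∏ e, (r e).elim 1 MvPolynomial.X) *
    MvPolynomial.C (f (fun e => (r e).elim (a e) (b e))), fun t => ?_⟩
  have h : (fun e => a e + ∑ k, t k • b e k) =
      fun e => ∑ o : Option κ, (o.elim 1 t) • (o.elim (a e) (b e)) := by
    funext e
    simp [Fintype.sum_option]
  rw [h, f.map_sum, map_sum]
  refine Finset.sum_congr rfl fun r _ => ?_
  rw [f.map_smul_univ, map_mul, map_prod, MvPolynomial.eval_C, smul_eq_mul]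
  congr 1
  refine Finset.prod_congr rfl fun e _ => ?_
  cases r e <;> simp

/-- A monotone function on a finite linear order is determined by its multiset of values. -/
lemma eq_of_monotone_of_map_eq {ι X : Type*} [Fintype ι] [LinearOrder ι] [LinearOrder X]
    {g h : ι → X} (hg : Monotone g) (hh : Monotone h)
    (he : (Finset.univ.val : Multiset ι).map g = Finset.univ.val.map h) : g = h := by
  let φ := Fintype.orderIsoFinOfCardEq ι rfl
  have key : ∀ k : ι → X, (Finset.univ.val : Multiset ι).map k = (List.ofFn (k ∘ φ) : List X) := by
    intro k
    have h1 : (Finset.univ.val : Multiset ι) = (Finset.univ.val).map φ := by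
      exact (congrArg Finset.val (Finset.map_univ_equiv φ.toEquiv)).symm
    rw [h1, Multiset.map_map, Fin.univ_val_map]
  rw [key, key, Multiset.coe_eq_coe] at he
  have := List.ofFn_injective (he.eq_of_sortedLE (hg.comp φ.monotone).sortedLE_ofFn
    (hh.comp φ.monotone).sortedLE_ofFn)
  funext e
  simpa using congrFun this (φ.symm e)

/-- Monotone maps `E → Fin (s + 1)` attaining the top value inject into multisets of size `d - 1`:
take the multiset of values, drop one top value, and pad with top values. -/
lemma card_monotone_le {d s : ℕ} (E : Finset (Fin d)) :
    Nat.card {i : E → Fin (s + 1) // Monotone i ∧ ∃ e, i e = Fin.last s} ≤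
      Nat.choose (s + d - 1) (d - 1) := by
  classical
  have hcard : Nat.card (Sym (Fin (s + 1)) (d - 1)) = Nat.choose (s + d - 1) (d - 1) := by
    rw [Nat.card_eq_fintype_card, Sym.card_sym_eq_choose, Fintype.card_fin]
    rcases d with _ | d
    · simp
    · congr 1; omega
  rw [← hcard]
  have hEd : E.card ≤ d := by simpa using E.card_le_univ
  have hmem : ∀ i : {i : E → Fin (s + 1) // Monotone i ∧ ∃ e, i e = Fin.last s},
      Fin.last s ∈ (Finset.univ.val : Multiset E).map i.1 := by
    rintro ⟨i, -, e, he⟩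
    exact Multiset.mem_map.2 ⟨e, Finset.mem_univ _, he⟩
  let Φ : {i : E → Fin (s + 1) // Monotone i ∧ ∃ e, i e = Fin.last s} →
      Sym (Fin (s + 1)) (d - 1) := fun i =>
    ⟨((Finset.univ.val : Multiset E).map i.1).erase (Fin.last s) +
      Multiset.replicate (d - E.card) (Fin.last s), by
        obtain ⟨e, -⟩ := i.2.2
        have : 0 < E.card := Finset.card_pos.2 ⟨e.1, e.2⟩
        rw [Multiset.card_add, Multiset.card_erase_of_mem (hmem i)]
        rw [Multiset.card_map, Finset.card_val, Finset.card_univ, Fintype.card_coe,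
          Multiset.card_replicate, Nat.pred_eq_sub_one]
        omega⟩
  refine Nat.card_le_card_of_injective Φ fun i i' h => ?_
  have h1 := add_right_cancel (congrArg Subtype.val h)
  have h2 := congrArg (fun m => Fin.last s ::ₘ m) h1
  simp only [Multiset.cons_erase (hmem _)] at h2
  exact Subtype.ext (eq_of_monotone_of_map_eq i.2.1 i'.2.1 h2)

/-- The greedy step: a family on which all `f j` vanish along monotone index maps can be enlarged by
one vector, provided the dimension exceeds the number of equations on that vector plus `s`. -/
lemma exists_extension {K V : Type*} [Field K] [IsAlgClosed K] [AddCommGroup V] [Module K V]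
    [FiniteDimensional K V] {d r s : ℕ} (E : Fin r → Finset (Fin d))
    (f : ∀ j, MultilinearMap K (fun _ : E j => V) K)
    (u : Fin s → V) (hu : LinearIndependent K u)
    (hz : ∀ j (i : E j → Fin s), Monotone i → f j (u ∘ i) = 0)
    (hlt : r * Nat.choose (s + d - 1) (d - 1) + s < finrank K V) :
    ∃ u' : Fin (s + 1) → V, LinearIndependent K u' ∧
      ∀ j (i : E j → Fin (s + 1)), Monotone i → f j (u' ∘ i) = 0 := by
  classical
  obtain ⟨C, hC⟩ := (Submodule.span K (Set.range u)).exists_isCompl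
  have hdim : finrank K (Submodule.span K (Set.range u)) + finrank K C = finrank K V :=
    Submodule.finrank_add_eq_of_isCompl hC
  rw [finrank_span_eq_card hu, Fintype.card_fin] at hdim
  let b := finBasis K C
  -- the conditions imposed on the new vector
  let I := Σ j, {i : E j → Fin (s + 1) // Monotone i ∧ ∃ e, i e = Fin.last s}
  have hI : Fintype.card I ≤ r * Nat.choose (s + d - 1) (d - 1) := by
    rw [Fintype.card_sigma]
    refine (Finset.sum_le_card_nsmul _ _ (Nat.choose (s + d - 1) (d - 1)) fun j _ => ?_).trans ?_
    · rw [← Nat.card_eq_fintype_card]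
      exact card_monotone_le (E j)
    · simp
  -- `snoc u (∑ l, t l • b l)` is affine in `t`, with constant part `snoc u 0`
  have hP := fun k : I => exists_polynomial_of_affine (f k.1)
    (fun e => (Fin.snoc u 0 : Fin (s + 1) → V) (k.2.1 e))
    (fun e l => (Fin.snoc 0 (b l : V) : Fin (s + 1) → V) (k.2.1 e))
  choose p hp using hP
  have hp' : ∀ k t, MvPolynomial.eval t (p k) =
      f k.1 ((Fin.snoc u (∑ l, t l • (b l : V)) : Fin (s + 1) → V) ∘ k.2.1) := by
    intro k t
    rw [hp]
    congr 1
    funext e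
    simp only [Function.comp_apply]
    cases k.2.1 e using Fin.lastCases <;> simp
  obtain ⟨t, ht, hpt⟩ := exists_ne_zero_common_zero p (fun k => by
    rw [hp']
    obtain ⟨e, he⟩ := k.2.2.2
    exact (f k.1).map_coord_zero e (by simp [he])) (by omega)
  have hx : (∑ l, t l • (b l : V)) = ((∑ l, t l • b l : C) : V) := by simp
  refine ⟨Fin.snoc u (∑ l, t l • (b l : V)), linearIndependent_finSnoc.2 ⟨hu, fun hmem => ?_⟩, ?_⟩
  · have h0 : (∑ l, t l • b l : C) = 0 := by
      have := Submodule.disjoint_def.1 hC.disjoint _ hmem (hx ▸ Subtype.prop _)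
      rw [hx] at this
      exact_mod_cast this
    exact ht (funext (Fintype.linearIndependent_iff.1 b.linearIndependent t h0))
  · intro j i hi
    -- index maps missing the top value only involve the old vectors
    by_cases hlast : ∃ e, i e = Fin.last s
    · rw [← hpt ⟨j, i, hi, hlast⟩, hp']
    · push Not at hlast
      have := hz j (fun e => (i e).castPred (hlast e)) (fun e e' hee => by
        simpa using hi hee)
      rw [← this]
      congr 1
      funext e
      simp only [Function.comp_apply]
      conv_lhs => rw [← Fin.castSucc_castPred (i e) (hlast e)]
      rw [Fin.snoc_castSucc]

/-- For a symmetric map, vanishing on the weakly increasing tuples from `u` suffices for vanishing on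
the span of `u`. -/
lemma eq_zero_on_span {K V W : Type*} [Field K] [AddCommGroup V] [Module K V]
    [AddCommGroup W] [Module K W] {d s : ℕ} (F : MultilinearMap K (fun _ : Fin d => V) W)
    (hsym : ∀ (e : Equiv.Perm (Fin d)) (v : Fin d → V), F (v ∘ e) = F v)
    (u : Fin s → V) (hu : ∀ i : Fin d → Fin s, Monotone i → F (u ∘ i) = 0)
    (v : Fin d → V) (hv : ∀ i, v i ∈ Submodule.span K (Set.range u)) : F v = 0 := by
  have hv' : ∀ i, ∃ c : Fin s → K, ∑ k, c k • u k = v i := fun i =>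
    (Submodule.mem_span_range_iff_exists_fun K).1 (hv i)
  choose c hc using hv'
  have : v = fun i => ∑ k, c i k • u k := funext fun i => (hc i).symm
  rw [this, F.map_sum]
  refine Finset.sum_eq_zero fun g _ => ?_
  rw [F.map_smul_univ]
  have h1 : F (fun i => u (g i)) = 0 := by
    rw [← hsym (Tuple.sort g)]
    exact hu (g ∘ Tuple.sort g) (Tuple.monotone_sort g)
  rw [h1, smul_zero]

/-- The infimum defining the partition rank is attained: expanding the first argument in a basis
shows that some decomposition exists, so the infimum is not the junk value of an empty set. -/
lemma exists_partitionRank_decomposition {K : Type} [Field K] {d : ℕ} (hd : 0 < d)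
    {V W : Type} [AddCommGroup V] [Module K V] [FiniteDimensional K V]
    [AddCommGroup W] [Module K W] (F : MultilinearMap K (fun _ : Fin d => V) W) :
    ∃ c : Fin (mapPartitionRank F) → MultilinearMap K (fun _ : Fin d => V) W,
      (∀ j, IsPartitionRankOneMap (c j)) ∧ F = ∑ j, c j := by
  classical
  refine Nat.sInf_mem (s := {r : ℕ | ∃ c : Fin r → MultilinearMap K (fun _ : Fin d => V) W,
    (∀ j, IsPartitionRankOneMap (c j)) ∧ F = ∑ j, c j}) ?_
  let z : Fin d := ⟨0, hd⟩
  let b := finBasis K V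
  let L : Fin (finrank K V) → V →ₗ[K] V := fun k => (b.coord k).smulRight (b k)
  let c : Fin (finrank K V) → MultilinearMap K (fun _ : Fin d => V) W := fun k =>
    F.compLinearMap (fun i => if i = z then L k else LinearMap.id)
  have hc : ∀ k v, c k v = F (Function.update v z (b.coord k (v z) • b k)) := by
    intro k v
    simp only [c, MultilinearMap.compLinearMap_apply]
    congr 1
    funext i
    by_cases hi : i = z
    · subst hi; simp [L]
    · simp [hi]
  refine ⟨finrank K V, c, fun k => ?_, ?_⟩
  · have : Subsingleton ↥({z} : Finset (Fin d)) := by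
      constructor
      rintro ⟨x, hx⟩ ⟨y, hy⟩
      rw [Finset.mem_singleton] at hx hy
      exact Subtype.ext (hx.trans hy.symm)
    refine ⟨{z}, Finset.singleton_nonempty z,
      MultilinearMap.ofSubsingleton K V K ⟨z, Finset.mem_singleton_self z⟩ (b.coord k),
      F.domDomRestrict (fun i => i ∈ ({z} : Finset (Fin d))ᶜ) (fun _ => b k), fun v => ?_⟩
    rw [hc, MultilinearMap.map_update_smul, MultilinearMap.ofSubsingleton_apply_apply]
    congr 1
    rw [MultilinearMap.domDomRestrict_apply]
    congr 1
    funext i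
    by_cases hi : i = z
    · subst hi; simp
    · simp [hi]
  · ext v
    rw [sum_apply]
    simp only [hc]
    rw [← MultilinearMap.map_update_sum]
    have : ∑ k, b.coord k (v z) • b k = v z := b.sum_repr (v z)
    rw [this, Function.update_eq_self]

/-- **Bounds on the isotropy index, symmetric case.**  If `K` is an algebraically closed field
and `F : V^d → W` is a nonzero symmetric multilinear map between finite-dimensional vector
spaces over `K` with `m = dim V`, then `m ≤ PR(T_F)·C(α_S(F)+d-1, d-1) + α_S(F)`. -/
theorem isotropy_index_bound_symmetric {K : Type} [Field K] [IsAlgClosed K]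
    {d : ℕ} (hd : 0 < d)
    (V W : Type) [AddCommGroup V] [Module K V] [FiniteDimensional K V]
    [AddCommGroup W] [Module K W] [FiniteDimensional K W]
    (F : MultilinearMap K (fun _ : Fin d => V) W) (hsym : IsSymmetricMap F) (hF : F ≠ 0) :
    Module.finrank K V ≤
      mapPartitionRank F * Nat.choose (vanIndex F + d - 1) (d - 1) + vanIndex F := by
  classical
  obtain ⟨c, hc, hFc⟩ := exists_partitionRank_decomposition hd F
  set r := mapPartitionRank F
  choose E hE f G hfG using hc
  let P : ℕ → Prop := fun s => ∃ u : Fin s → V, LinearIndependent K u ∧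
    ∀ j (i : E j → Fin s), Monotone i → f j (u ∘ i) = 0
  have hP0 : P 0 := by
    refine ⟨Fin.elim0, linearIndependent_empty_type, fun j i _ => ?_⟩
    obtain ⟨e, he⟩ := hE j
    exact (i ⟨e, he⟩).elim0
  have hPle : ∀ s, P s → s ≤ finrank K V := by
    rintro s ⟨u, hu, -⟩
    simpa using hu.fintype_card_le_finrank
  have hPvan : ∀ s, P s → s ≤ vanIndex F := by
    rintro s ⟨u, hu, hz⟩
    refine le_csSup ⟨finrank K V, ?_⟩ ⟨Submodule.span K (Set.range u), ?_, ?_⟩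
    · rintro _ ⟨U, rfl, -⟩
      exact U.finrank_le
    · rw [finrank_span_eq_card hu, Fintype.card_fin]
    · refine eq_zero_on_span F hsym u fun i hi => ?_
      rw [hFc, sum_apply]
      refine Finset.sum_eq_zero fun j _ => ?_
      have hj : f j (fun e => (u ∘ i) e.val) = 0 :=
        hz j (fun e => i e.val) (fun e e' h => hi h)
      rw [hfG, hj, zero_smul]
  have hs : P (Nat.findGreatest P (finrank K V)) :=
    Nat.findGreatest_spec (Nat.zero_le _) hP0
  set s := Nat.findGreatest P (finrank K V) with hsdef
  have hbound : finrank K V ≤ r * Nat.choose (s + d - 1) (d - 1) + s := by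
    by_contra! hlt
    obtain ⟨u, hu, hz⟩ := hs
    have hnext : P (s + 1) := exists_extension E f u hu hz hlt
    have := Nat.le_findGreatest (hPle _ hnext) hnext
    omega
  have hle := hPvan s hs
  refine hbound.trans (Nat.add_le_add (Nat.mul_le_mul_left _ (Nat.choose_le_choose _ ?_)) hle)
  omega
end

section
/- Let V and W be finite-dimensional vector spaces over a field K and let F : V^d → W be a nonzero alternating multilinear map. If K is infinite, then GR(T_F) < C(β_Λ(F)+1, d). If K is finite with q elements, then AR(T_F) < d + C(β_Λ(F)+1, d) + ⌈C(β_Λ(F)+1, d)·(d-1)/(q-1)⌉. Here C(a,b) denotes the binomial coefficient 'a choose b'. -/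
/-!
Put `n = β_Λ(F) + 1` and `N = C(n, d)`. By maximality of `β_Λ(F)`, for every `u ∈ V^n` the `N`
vectors `F(u_J)`, with `J` a `d`-element subset of `{1, …, n}`, are linearly dependent
(`exists_relation`): otherwise `F` would be injective on `Λ^d` of the `n`-dimensional span of `u`.

Given a relation `∑_J c_J F(u_J) = 0`, consider the partial sums over `J ⊇ S` (`partialSum`).
Replacing `u_i` by the difference of two solutions that agree outside the slot `i` turns a zero of
the partial sum for `S` into a zero of the one for `S ∪ {i}` (`partialSum_insert_sub`). When `S`
has grown to a set `I` with `c_I ≠ 0`, only `c_I F(u_I)` is left. So the zeros of the relation are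
no more numerous than the tuples with `F(u_I) = 0`.

* Over a field with `q` elements, each of the fewer than `q^N` nonzero `c` therefore has at most
  `|V|^(n-d) * #{F = 0}` zeros, while together their zeros cover `V^n`. Hence
  `|V|^d < #{F = 0} * q^N`, that is `AR(T_F) < N` (`analyticRank_lt`), which is stronger than the
  stated bound.
* Over an infinite field, the generic point `u` of `V^n`, with coordinates in the rational function
  field `L`, satisfies a relation with `c_I = 1` for some `I` (`exists_generic_relation`). The
  second solution is obtained by applying to `u_i` a linear retraction of `L` onto the subfield
  generated by `c` and the other `u_j`, so that `c` and `u` still generate `L` after each step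
  (`exists_zero_insert`). At the end `F(u_I) = 0`, and the `N - 1` coefficients `c_J`, `J ≠ I`,
  with the `n * dim V` coordinates of `u` generate `L`, which has transcendence degree
  `n * dim V`. A transcendence basis among these generators omits `N - 1` of them, so the prime
  ideal of the point `u_I` of `V^d`, which contains the equations of `F`, has height at most
  `N - 1` (`height_ker_aeval_le`, `geomRank_lt`).
-/

open Module
open scoped TensorProduct

/-- The height of an ideal: the infimum of the heights of the prime ideals containing it
(in the poset of prime ideals ordered by inclusion). -/
noncomputable def idealHeight {R : Type*} [CommRing R] (I : Ideal R) : ℕ∞ :=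
  ⨅ p ∈ {p : PrimeSpectrum R | I ≤ p.asIdeal}, Order.height p

section Defs

variable {K : Type} [Field K] {d : ℕ} {V : Fin d → Type} {W : Type}
  [∀ i, AddCommGroup (V i)] [∀ i, Module K (V i)]
  [AddCommGroup W] [Module K W]

variable [∀ i, FiniteDimensional K (V i)] [FiniteDimensional K W]

/-- The geometric rank `GR(T_F)` of the tensor `T_F ∈ V₁* ⊗ ⋯ ⊗ V_d* ⊗ W` corresponding to a
multilinear map `F`: the codimension of the Zariski-closed set
`{(v₁, …, v_d) : F(v₁, …, v_d) = 0}` (identifying `Vᵢ** = Vᵢ`), computed as the height of the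
ideal of the polynomial ring generated by the coordinate polynomials of `F` with respect to
choices of bases. -/
noncomputable def mapGeomRank (F : MultilinearMap K V W) : ℕ∞ :=
  idealHeight (Ideal.span (Set.range fun w : Module.Free.ChooseBasisIndex K W =>
    ∑ g : ∀ i, Module.Free.ChooseBasisIndex K (V i),
      MvPolynomial.C
          ((Module.Free.chooseBasis K W).coord w
            (F fun i => Module.Free.chooseBasis K (V i) (g i))) *
        ∏ i, MvPolynomial.X (⟨i, g i⟩ : Σ i, Module.Free.ChooseBasisIndex K (V i))))

/-- The analytic rank `AR(T_F)` (over a finite field with `q = |K|` elements) of the tensor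
`T_F` corresponding to a multilinear map `F`:
`AR(T_F) = ∑ᵢ dim Vᵢ − log_q |{v : F v = 0}|`. -/
noncomputable def mapAnalyticRank (F : MultilinearMap K V W) : ℝ :=
  (∑ i, (Module.finrank K (V i) : ℝ)) -
    Real.logb (Nat.card K) (Nat.card {v : ∀ i, V i // F v = 0})

variable {V₀ : Type} [AddCommGroup V₀] [Module K V₀]

/-- The completeness index `β_Λ(F)` of an alternating multilinear map `F : V^d → W`: the
largest dimension of a subspace `U ⊆ V` such that the restriction of `F` to `U^d`, viewed as a
linear map on the exterior power `Λ^d U`, is injective. -/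
noncomputable def altCompIndex (F : V₀ [⋀^Fin d]→ₗ[K] W) : ℕ :=
  sSup {s : ℕ | ∃ U : Submodule K V₀, Module.finrank K U = s ∧
    Function.Injective (fun T : ⋀[K]^d ↥U =>
      ExteriorAlgebra.liftAlternating
        (fun i => if h : d = i then h ▸ F.compLinearMap U.subtype else 0) T.val)}

end Defs

/-! ### Partial sums of a relation -/

/-- The part `∑_{J ⊇ S} c_J F(u_J)` of the combination `∑_J c_J F(u_J)`, where `J` runs over the
`d`-element subsets of `Fin n`, encoded as order embeddings `Fin d ↪o Fin n`, and
`u_J = (u_{J 0}, …, u_{J (d-1)})`. -/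
noncomputable def partialSum {K V W : Type*} [Field K] [AddCommGroup V] [Module K V]
    [AddCommGroup W] [Module K W] {d n : ℕ} (F : MultilinearMap K (fun _ : Fin d => V) W)
    (c : (Fin d ↪o Fin n) → K) (S : Finset (Fin n)) (u : Fin n → V) : W :=
  open Classical in
  ∑ J : Fin d ↪o Fin n, if ∀ s ∈ S, ∃ k, J k = s then c J • F (fun k => u (J k)) else 0

/-- Multilinearity in the `i`-th vector: in the difference the summands with `i ∉ J` cancel. -/
lemma partialSum_insert_sub {K V W : Type*} [Field K] [AddCommGroup V] [Module K V]
    [AddCommGroup W] [Module K W] {d n : ℕ} (F : MultilinearMap K (fun _ : Fin d => V) W)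
    (c : (Fin d ↪o Fin n) → K) (S : Finset (Fin n)) (i : Fin n) (u : Fin n → V)
    (x y : V) :
    partialSum F c (insert i S) (Function.update u i (x - y)) =
      partialSum F c S (Function.update u i x) - partialSum F c S (Function.update u i y) := by
  unfold partialSum
  rw [← Finset.sum_sub_distrib]
  refine Finset.sum_congr rfl fun J _ => ?_
  by_cases hS : ∀ s ∈ S, ∃ k, J k = s
  · by_cases hi : ∃ k, J k = i
    · have h1 : ∀ s ∈ insert i S, ∃ k, J k = s := by
        intro s hs
        rcases Finset.mem_insert.1 hs with rfl | hs
        exacts [hi, hS s hs]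
      rw [if_pos h1, if_pos hS, if_pos hS]
      obtain ⟨k, rfl⟩ := hi
      have key : ∀ z : V, (fun l => Function.update u (J k) z (J l)) =
          Function.update (fun l => u (J l)) k z := fun z =>
        Function.update_comp_eq_of_injective u J.injective k z
      rw [key, key, key, F.map_update_sub, smul_sub]
    · have h1 : ¬ ∀ s ∈ insert i S, ∃ k, J k = s := fun h =>
        hi (h i (Finset.mem_insert_self _ _))
      rw [if_neg h1, if_pos hS, if_pos hS]
      have key : ∀ z : V, (fun l => Function.update u i z (J l)) = fun l => u (J l) := fun z =>
        funext fun l => Function.update_of_ne (fun h => hi ⟨l, h⟩) _ _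
      rw [key, key, sub_self]
  · have h1 : ¬ ∀ s ∈ insert i S, ∃ k, J k = s := fun h =>
      hS fun s hs => h s (Finset.mem_insert_of_mem hs)
    simp only [if_neg h1, if_neg hS, sub_self]

/-- The only `d`-element set containing the image of `I` is that image. -/
lemma partialSum_image {K V W : Type*} [Field K] [AddCommGroup V] [Module K V]
    [AddCommGroup W] [Module K W] {d n : ℕ} (F : MultilinearMap K (fun _ : Fin d => V) W)
    (c : (Fin d ↪o Fin n) → K) (I : Fin d ↪o Fin n) (u : Fin n → V) :
    partialSum F c (Finset.univ.image I) u = c I • F (fun k => u (I k)) := by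
  unfold partialSum
  rw [Finset.sum_eq_single I]
  · rw [if_pos]
    intro s hs
    simpa using hs
  · intro J _ hJ
    rw [if_neg]
    intro h
    apply hJ
    have hsub : Finset.univ.image I ⊆ Finset.univ.image J := by
      intro s hs
      simpa using h s hs
    have hcard : ∀ I : Fin d ↪o Fin n, (Finset.univ.image I).card = d := fun I => by
      rw [Finset.card_image_of_injective _ I.injective]; simp
    have heq := Finset.eq_of_subset_of_card_le hsub (by rw [hcard, hcard])
    have hI := Finset.orderEmbOfFin_unique' (hcard J) (f := I)
      (fun k => heq ▸ Finset.mem_image_of_mem _ (Finset.mem_univ k))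
    have hJ := Finset.orderEmbOfFin_unique' (hcard J) (f := J)
      (fun k => Finset.mem_image_of_mem _ (Finset.mem_univ k))
    rw [hI, ← hJ]
  · simp

/-! ### Relations from the completeness index -/

/-- If the `C(n, d)` vectors `F(u_J)` are independent, then `Λ^d` of `U = span(u)`, whose dimension is
at most `C(n, d)`, is mapped injectively, and `dim U = n`. -/
lemma le_altCompIndex {K V W : Type} [Field K] [AddCommGroup V] [Module K V]
    [FiniteDimensional K V] [AddCommGroup W] [Module K W] [FiniteDimensional K W]
    {d n : ℕ} (hd : 0 < d) (hn : d ≤ n)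
    (F : V [⋀^Fin d]→ₗ[K] W) (u : Fin n → V)
    (hu : LinearIndependent K fun J : Fin d ↪o Fin n => F (fun k => u (J k))) :
    n ≤ altCompIndex F := by
  let U := Submodule.span K (Set.range u)
  let φ : ⋀[K]^d U →ₗ[K] W := (ExteriorAlgebra.liftAlternating
        (fun i => if h : d = i then h ▸ F.compLinearMap U.subtype else 0)) ∘ₗ
        (⋀[K]^d U).subtype
  have hφ : ∀ v : Fin d → U, φ (exteriorPower.ιMulti K d v) = F (fun k => (v k : V)) := by
    intro v
    simp only [φ, LinearMap.comp_apply, Submodule.subtype_apply, exteriorPower.ιMulti_apply_coe,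
      ExteriorAlgebra.liftAlternating_apply_ιMulti]
    simp
  have hUn : Module.finrank K U ≤ n := by
    exact (finrank_range_le_card (R := K) u).trans (by simp)
  have hcard : Fintype.card (Fin d ↪o Fin n) = n.choose d := by
    rw [← Nat.card_eq_fintype_card, Nat.card_congr Set.powersetCard.ofFinEmbEquiv,
      Set.powersetCard.card, Nat.card_fin]
  have hrange : n.choose d ≤ Module.finrank K (LinearMap.range φ) := by
    rw [← hcard, ← finrank_span_eq_card hu]
    apply Submodule.finrank_mono
    rw [Submodule.span_le]
    rintro _ ⟨J, rfl⟩
    exact ⟨_, hφ fun k => ⟨u (J k), Submodule.subset_span ⟨_, rfl⟩⟩⟩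
  have hrn := LinearMap.finrank_range_add_finrank_ker φ
  rw [exteriorPower.finrank_eq] at hrn
  have hmono : (Module.finrank K U).choose d ≤ n.choose d := Nat.choose_le_choose d hUn
  have hker : LinearMap.ker φ = ⊥ := by
    apply Submodule.finrank_eq_zero.1
    omega
  have hU : Module.finrank K U = n := by
    by_contra hne
    have h1 : Module.finrank K U ≤ n - 1 := by omega
    have h2 := Nat.choose_le_choose d h1
    obtain ⟨n', rfl⟩ : ∃ n', n = n' + 1 := ⟨n - 1, by omega⟩
    obtain ⟨d', rfl⟩ : ∃ d', d = d' + 1 := ⟨d - 1, by omega⟩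
    have h3 := Nat.choose_succ_succ n' d'
    have h4 : 0 < n'.choose d' := Nat.choose_pos (by omega)
    simp only [Nat.add_sub_cancel] at h2
    simp only [Nat.succ_eq_add_one] at h3
    omega
  refine le_csSup ⟨Module.finrank K V, ?_⟩ ⟨U, hU, LinearMap.ker_eq_bot.1 hker⟩
  rintro s ⟨U', rfl, -⟩
  exact Submodule.finrank_le U'

/-- Any `β_Λ(F) + 1` vectors satisfy a nontrivial relation among the values `F(u_J)`. -/
lemma exists_relation {K V W : Type} [Field K] [AddCommGroup V] [Module K V]
    [FiniteDimensional K V] [AddCommGroup W] [Module K W] [FiniteDimensional K W]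
    {d : ℕ} (hd : 0 < d) (F : V [⋀^Fin d]→ₗ[K] W) (hn : d ≤ altCompIndex F + 1)
    (u : Fin (altCompIndex F + 1) → V) :
    ¬ LinearIndependent K fun J : Fin d ↪o Fin (altCompIndex F + 1) => F (fun k => u (J k)) :=
  fun h => by
    have := le_altCompIndex hd hn F u h
    omega

/-- A tuple with `F v ≠ 0` spans a subspace on which `F` is complete. -/
lemma degree_le_altCompIndex {K V W : Type} [Field K] [AddCommGroup V] [Module K V]
    [FiniteDimensional K V] [AddCommGroup W] [Module K W] [FiniteDimensional K W]
    {d : ℕ} (hd : 0 < d) (F : V [⋀^Fin d]→ₗ[K] W) (hF : F ≠ 0) : d ≤ altCompIndex F := by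
  obtain ⟨v, hv⟩ : ∃ v, F v ≠ 0 := by
    by_contra! h
    exact hF (AlternatingMap.ext h)
  have hid : ∀ J : Fin d ↪o Fin d, ∀ k, J k = k := by
    intro J k
    have : J = (OrderIso.refl (Fin d)).toOrderEmbedding := by
      ext k
      have := J.strictMono.range_inj (g := id) strictMono_id |>.1 (by
        rw [Set.range_id, Set.range_eq_univ]
        exact Finite.surjective_of_injective J.injective)
      simp [this]
    simp [this]
  have : Subsingleton (Fin d ↪o Fin d) := ⟨fun I J => by ext k; rw [hid, hid]⟩
  apply le_altCompIndex hd le_rfl F v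
  rw [linearIndependent_subsingleton_index_iff]
  intro J
  simpa [hid] using hv

/-! ### Counting zeros over a finite field -/

/-- The map `u ↦ u - p(u)` in the `i`-th slot, where `p(u)` depends only on the other slots and solves
the equation there, injects the zeros for `S` into those for `insert i S`. -/
lemma card_zeros_insert_le {K V W : Type*} [Field K] [AddCommGroup V] [Module K V] [Finite V]
    [AddCommGroup W] [Module K W] {d n : ℕ} (F : MultilinearMap K (fun _ : Fin d => V) W)
    (c : (Fin d ↪o Fin n) → K) (S : Finset (Fin n)) (i : Fin n) :
    Nat.card {u : Fin n → V // partialSum F c S u = 0} ≤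
      Nat.card {u : Fin n → V // partialSum F c (insert i S) u = 0} := by
  -- A solution for the `i`-th vector, chosen from the remaining vectors only.
  let p : (Fin n → V) → V := fun u =>
    Classical.epsilon fun x => partialSum F c S (Function.update (Function.update u i 0) i x) = 0
  have hp : ∀ u, partialSum F c S u = 0 → partialSum F c S (Function.update u i (p u)) = 0 := by
    intro u hu
    have h : ∃ x, partialSum F c S (Function.update (Function.update u i 0) i x) = 0 :=
      ⟨u i, by simpa using hu⟩
    have hx := Classical.epsilon_spec h
    rwa [Function.update_idem] at hx
  refine Nat.card_le_card_of_injective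
    (fun u => ⟨Function.update u.1 i (u.1 i - p u.1), ?_⟩) ?_
  · rw [partialSum_insert_sub, hp _ u.2, Function.update_eq_self, u.2, sub_zero]
  · rintro ⟨u, hu⟩ ⟨v, hv⟩ h
    simp only [Subtype.mk.injEq] at h ⊢
    have h0 : Function.update u i 0 = Function.update v i 0 := by
      have := congrArg (fun f => Function.update f i (0 : V)) h
      simpa using this
    have hpuv : p u = p v := by simp only [p, h0]
    have hi := congrFun h i
    simp only [Function.update_self, hpuv, sub_left_inj] at hi
    funext j
    by_cases hj : j = i
    · rw [hj, hi]
    · simpa [hj] using congrFun h j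

lemma card_zeros_le {K V W : Type*} [Field K] [AddCommGroup V] [Module K V] [Finite V]
    [AddCommGroup W] [Module K W] {d n : ℕ} (F : MultilinearMap K (fun _ : Fin d => V) W)
    (c : (Fin d ↪o Fin n) → K) (S : Finset (Fin n)) :
    Nat.card {u : Fin n → V // partialSum F c ∅ u = 0} ≤
      Nat.card {u : Fin n → V // partialSum F c S u = 0} := by
  induction S using Finset.induction_on with
  | empty => exact le_rfl
  | insert i S _ ih => exact ih.trans (card_zeros_insert_le F c S i)

/-- The vectors outside the image of `I` are free. -/
lemma card_zeros_comp {K V W : Type*} [Field K] [AddCommGroup V] [Module K V] [Finite V]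
    [AddCommGroup W] [Module K W] {d n : ℕ} (F : MultilinearMap K (fun _ : Fin d => V) W)
    (I : Fin d ↪o Fin n) :
    Nat.card {u : Fin n → V // F (fun k => u (I k)) = 0} * Nat.card V ^ d =
      Nat.card {v : Fin d → V // F v = 0} * Nat.card V ^ n := by
  have e1 : Nat.card {j : Fin n // j ∈ Set.range I} = d := by
    rw [← Nat.card_congr (Equiv.ofInjective I I.injective), Nat.card_fin]
  have e2 : Nat.card {j : Fin n // j ∈ Set.range I} + Nat.card {j : Fin n // ¬ j ∈ Set.range I}
      = n := by
    classical
    rw [← Nat.card_sum, Nat.card_congr (Equiv.sumCompl _), Nat.card_fin]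
  have e3 : {u : Fin n → V // F (fun k => u (I k)) = 0} ≃
      {v : Fin d → V // F v = 0} × ({j : Fin n // ¬ j ∈ Set.range I} → V) := by
    classical
    refine (Equiv.subtypeEquiv ((Equiv.piEquivPiSubtypeProd (fun j => j ∈ Set.range I)
      (fun _ => V)).trans (Equiv.prodCongrLeft fun _ =>
        (Equiv.arrowCongr (Equiv.ofInjective I I.injective).symm (Equiv.refl V))))
        (q := fun z => F z.1 = 0) ?_).trans ?_
    · intro u
      rfl
    · exact
      { toFun := fun z => (⟨z.1.1, z.2⟩, z.1.2)
        invFun := fun z => ⟨(z.1.1, z.2), z.1.2⟩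
        left_inv := fun _ => rfl
        right_inv := fun _ => rfl }
  rw [e1] at e2
  have e4 : Nat.card V ^ n =
      Nat.card V ^ d * Nat.card V ^ Nat.card {j : Fin n // ¬ j ∈ Set.range I} := by
    rw [← pow_add, e2]
  rw [Nat.card_congr e3, Nat.card_prod, Nat.card_fun, e4]
  ring

/-- Each `u ∈ V^n` is a zero of the relation of some `c ≠ 0`; each such `c` has at most
`|V|^(n-d) * #{F = 0}` zeros, and there are fewer than `q ^ C(n, d)` of them. -/
lemma finite_field_count {K V W : Type} [Field K] [Finite K] [AddCommGroup V] [Module K V]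
    [FiniteDimensional K V] [AddCommGroup W] [Module K W] [FiniteDimensional K W]
    {d n : ℕ} (F : MultilinearMap K (fun _ : Fin d => V) W)
    (h : ∀ u : Fin n → V,
      ¬ LinearIndependent K fun J : Fin d ↪o Fin n => F (fun k => u (J k))) :
    Nat.card V ^ d < Nat.card {v : Fin d → V // F v = 0} * Nat.card K ^ (n.choose d) := by
  classical
  have : Finite V := Module.finite_of_finite K
  have hcard : Fintype.card (Fin d ↪o Fin n) = n.choose d := by
    rw [← Nat.card_eq_fintype_card, Nat.card_congr Set.powersetCard.ofFinEmbEquiv,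
      Set.powersetCard.card, Nat.card_fin]
  have hVpos : 0 < Nat.card V := Nat.card_pos
  by_contra! hle
  have hc : ∀ c : (Fin d ↪o Fin n) → K, c ≠ 0 →
      Nat.card {u : Fin n → V // partialSum F c ∅ u = 0} * Nat.card K ^ (n.choose d) ≤
        Nat.card V ^ n := by
    intro c hc
    obtain ⟨I, hI⟩ := Function.ne_iff.1 hc
    have h1 := card_zeros_le F c (Finset.univ.image I)
    have h2 : Nat.card {u : Fin n → V // partialSum F c (Finset.univ.image I) u = 0} =
        Nat.card {u : Fin n → V // F (fun k => u (I k)) = 0} := by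
      refine Nat.card_congr (Equiv.subtypeEquivRight fun u => ?_)
      rw [partialSum_image, smul_eq_zero_iff_right hI]
    rw [h2] at h1
    have h3 := card_zeros_comp F I
    refine Nat.le_of_mul_le_mul_right (c := Nat.card V ^ d) ?_ (by positivity)
    calc _ ≤ Nat.card {u : Fin n → V // F (fun k => u (I k)) = 0} *
          Nat.card K ^ (n.choose d) * Nat.card V ^ d := by gcongr
      _ = (Nat.card {v : Fin d → V // F v = 0} * Nat.card K ^ (n.choose d)) * Nat.card V ^ n := by
          rw [mul_right_comm, h3]; ring
      _ ≤ Nat.card V ^ d * Nat.card V ^ n := by gcongr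
      _ = _ := mul_comm _ _
  have hinj : Nat.card (Fin n → V) ≤ Nat.card (Σ c : {c : (Fin d ↪o Fin n) → K // c ≠ 0},
      {u : Fin n → V // partialSum F c.1 ∅ u = 0}) := by
    have hrel : ∀ u : Fin n → V, ∃ c : (Fin d ↪o Fin n) → K, c ≠ 0 ∧ partialSum F c ∅ u = 0 := by
      intro u
      have := h u
      rw [Fintype.not_linearIndependent_iff] at this
      obtain ⟨c, hc, I, hI⟩ := this
      exact ⟨c, fun h0 => hI (by simp [h0]), by simpa [partialSum] using hc⟩
    choose c hc0 hc using hrel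
    refine Nat.card_le_card_of_injective (fun u => ⟨⟨c u, hc0 u⟩, ⟨u, hc u⟩⟩) ?_
    intro u v huv
    have := congrArg (fun z : (Σ c : {c : (Fin d ↪o Fin n) → K // c ≠ 0},
      {u : Fin n → V // partialSum F c.1 ∅ u = 0}) => z.2.1) huv
    exact this
  have := Fintype.ofFinite K
  have hne : Nat.card {c : (Fin d ↪o Fin n) → K // c ≠ 0} + 1 = Nat.card K ^ (n.choose d) := by
    rw [← hcard, ← Nat.card_eq_fintype_card, ← Nat.card_fun, Nat.card_eq_fintype_card,
      Nat.card_eq_fintype_card, Fintype.card_subtype_compl, Fintype.card_subtype_eq]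
    have : 0 < Fintype.card ((Fin d ↪o Fin n) → K) := Fintype.card_pos
    omega
  rw [Nat.card_fun, Nat.card_fin, Nat.card_sigma] at hinj
  have hfin := Nat.mul_le_mul_right (Nat.card K ^ (n.choose d)) hinj
  rw [Finset.sum_mul] at hfin
  have hfin2 := hfin.trans (Finset.sum_le_sum fun c _ => hc c.1 c.2)
  rw [Finset.sum_const, Finset.card_univ, ← Nat.card_eq_fintype_card, smul_eq_mul, mul_comm] at hfin2
  have := Nat.le_of_mul_le_mul_right hfin2 (by positivity)
  omega

/-- The logarithmic form of `finite_field_count`. -/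
lemma analyticRank_lt {K V W : Type} [Field K] [Finite K] [AddCommGroup V] [Module K V]
    [FiniteDimensional K V] [AddCommGroup W] [Module K W] [FiniteDimensional K W]
    {d n : ℕ} (F : MultilinearMap K (fun _ : Fin d => V) W)
    (h : ∀ u : Fin n → V,
      ¬ LinearIndependent K fun J : Fin d ↪o Fin n => F (fun k => u (J k))) :
    mapAnalyticRank F < (n.choose d : ℝ) := by
  have hcount := finite_field_count F h
  have : Finite V := Module.finite_of_finite K
  have hq : (1 : ℝ) < Nat.card K := by exact_mod_cast Finite.one_lt_card
  have hV : Nat.card V = Nat.card K ^ Module.finrank K V := Module.natCard_eq_pow_finrank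
  rw [hV, ← pow_mul] at hcount
  have hcount' : (Nat.card K : ℝ) ^ (Module.finrank K V * d) <
      Nat.card {v : Fin d → V // F v = 0} * (Nat.card K : ℝ) ^ (n.choose d) := by
    exact_mod_cast hcount
  have hZ : (0 : ℝ) < Nat.card {v : Fin d → V // F v = 0} := by
    by_contra! h0
    have : (0 : ℝ) < (Nat.card K : ℝ) ^ (n.choose d) := by positivity
    have h2 : (0 : ℝ) < (Nat.card K : ℝ) ^ (Module.finrank K V * d) := by positivity
    nlinarith
  have hlog := Real.logb_lt_logb hq (by positivity) hcount'
  rw [Real.logb_mul hZ.ne' (by positivity), Real.logb_pow, Real.logb_pow,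
    Real.logb_self_eq_one hq] at hlog
  unfold mapAnalyticRank
  simp only [Finset.sum_const, Finset.card_univ, Fintype.card_fin, nsmul_eq_mul]
  push_cast at hlog
  linarith

/-! ### The generic relation -/

/-- The `w`-th coordinate polynomial of `F`, evaluated at the coordinate vectors `x i` with entries
in a commutative `K`-algebra `A`. Coordinates refer to the bases chosen in `mapGeomRank`. -/
noncomputable def coordEval {K V W : Type} [Field K] [AddCommGroup V] [Module K V]
    [FiniteDimensional K V] [AddCommGroup W] [Module K W] [FiniteDimensional K W] {d : ℕ}
    (F : MultilinearMap K (fun _ : Fin d => V) W) {A : Type} [CommRing A] [Algebra K A]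
    (x : Fin d → Module.Free.ChooseBasisIndex K V → A) (w : Module.Free.ChooseBasisIndex K W) :
    A :=
  ∑ g : Fin d → Module.Free.ChooseBasisIndex K V,
    algebraMap K A ((Module.Free.chooseBasis K W).coord w
      (F fun i => Module.Free.chooseBasis K V (g i))) * ∏ i, x i (g i)

lemma map_coordEval {K V W : Type} [Field K] [AddCommGroup V] [Module K V]
    [FiniteDimensional K V] [AddCommGroup W] [Module K W] [FiniteDimensional K W] {d : ℕ}
    (F : MultilinearMap K (fun _ : Fin d => V) W) {A B : Type} [CommRing A] [Algebra K A]
    [CommRing B] [Algebra K B] (f : A →ₐ[K] B)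
    (x : Fin d → Module.Free.ChooseBasisIndex K V → A) (w : Module.Free.ChooseBasisIndex K W) :
    f (coordEval F x w) = coordEval F (fun i a => f (x i a)) w := by
  simp [coordEval, map_sum, map_mul, map_prod]

lemma coord_apply_eq_coordEval {K V W : Type} [Field K] [AddCommGroup V] [Module K V]
    [FiniteDimensional K V] [AddCommGroup W] [Module K W] [FiniteDimensional K W] {d : ℕ}
    (F : MultilinearMap K (fun _ : Fin d => V) W)
    (x : Fin d → Module.Free.ChooseBasisIndex K V → K) (w : Module.Free.ChooseBasisIndex K W) :
    (Module.Free.chooseBasis K W).coord w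
      (F fun i => ∑ a, x i a • Module.Free.chooseBasis K V a) = coordEval F x w := by
  rw [F.map_sum, map_sum]
  simp_rw [F.map_smul_univ, map_smul, smul_eq_mul, coordEval, Algebra.algebraMap_self_apply,
    mul_comm]

/-- The extension of scalars of `F` to a field extension `L` of `K`, written in coordinates. -/
noncomputable def baseChangeMap {K V W : Type} [Field K] [AddCommGroup V] [Module K V]
    [FiniteDimensional K V] [AddCommGroup W] [Module K W] [FiniteDimensional K W] {d : ℕ}
    (F : MultilinearMap K (fun _ : Fin d => V) W) (L : Type) [Field L] [Algebra K L] :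
    MultilinearMap L (fun _ : Fin d => Module.Free.ChooseBasisIndex K V → L)
      (Module.Free.ChooseBasisIndex K W → L) :=
  MultilinearMap.pi fun w => ∑ g : Fin d → Module.Free.ChooseBasisIndex K V,
    algebraMap K L ((Module.Free.chooseBasis K W).coord w
      (F fun i => Module.Free.chooseBasis K V (g i))) •
      (MultilinearMap.mkPiAlgebra L (Fin d) L).compLinearMap
        (fun i => LinearMap.proj (g i))

lemma baseChangeMap_apply {K V W : Type} [Field K] [AddCommGroup V] [Module K V]
    [FiniteDimensional K V] [AddCommGroup W] [Module K W] [FiniteDimensional K W] {d : ℕ}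
    (F : MultilinearMap K (fun _ : Fin d => V) W) (L : Type) [Field L] [Algebra K L]
    (x : Fin d → Module.Free.ChooseBasisIndex K V → L) (w : Module.Free.ChooseBasisIndex K W) :
    baseChangeMap F L x w = coordEval F x w := by
  simp [baseChangeMap, coordEval]

/-- If every `K`-point satisfies a relation, so does the generic point. Otherwise a matrix of the
vectors `F(u_J)` has a left inverse over `L`; clearing denominators and evaluating at a `K`-point
where the common denominator is nonzero gives independent vectors over `K`. -/
lemma exists_generic_relation {K V W : Type} [Field K] [Infinite K] [AddCommGroup V] [Module K V]
    [FiniteDimensional K V] [AddCommGroup W] [Module K W] [FiniteDimensional K W] {d n : ℕ}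
    (F : MultilinearMap K (fun _ : Fin d => V) W)
    (h : ∀ u : Fin n → V,
      ¬ LinearIndependent K fun J : Fin d ↪o Fin n => F (fun k => u (J k)))
    (L : Type) [Field L] [Algebra (MvPolynomial (Fin n × Module.Free.ChooseBasisIndex K V) K) L]
    [Algebra K L] [IsScalarTower K (MvPolynomial (Fin n × Module.Free.ChooseBasisIndex K V) K) L]
    [IsFractionRing (MvPolynomial (Fin n × Module.Free.ChooseBasisIndex K V) K) L] :
    ¬ LinearIndependent L fun J : Fin d ↪o Fin n => baseChangeMap F L (fun k a =>
      algebraMap (MvPolynomial (Fin n × Module.Free.ChooseBasisIndex K V) K) L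
        (MvPolynomial.X (J k, a))) := by
  classical
  set R := MvPolynomial (Fin n × Module.Free.ChooseBasisIndex K V) K with hR
  intro hli
  -- A left inverse of the linear combination map, with the denominators cleared.
  obtain ⟨g, hg⟩ := LinearMap.exists_leftInverse_of_injective (Fintype.linearCombination L
    (fun J : Fin d ↪o Fin n => baseChangeMap F L (fun k a =>
      algebraMap R L (MvPolynomial.X (J k, a))))) (LinearMap.ker_eq_bot.2
        (linearIndependent_iff_injective_fintypeLinearCombination.1 hli))
  obtain ⟨r, hr⟩ := IsLocalization.exist_integer_multiples_of_finite (nonZeroDivisors R)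
    (fun z : Module.Free.ChooseBasisIndex K W × (Fin d ↪o Fin n) => g (Pi.single z.1 1) z.2)
  choose B hB using hr
  let p : (Fin d ↪o Fin n) → Module.Free.ChooseBasisIndex K W → R := fun J w =>
    coordEval F (fun k a => MvPolynomial.X (J k, a)) w
  have hp : ∀ J w, algebraMap R L (p J w) = baseChangeMap F L (fun k a =>
      algebraMap R L (MvPolynomial.X (J k, a))) w := by
    intro J w
    rw [baseChangeMap_apply]
    exact map_coordEval F (IsScalarTower.toAlgHom K R L) _ w
  have hmul : ∀ J J', ∑ w, p J w * B (w, J') = if J = J' then (r : R) else 0 := by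
    intro J J'
    apply IsFractionRing.injective R L
    have h1 := congrFun (LinearMap.congr_fun hg (Pi.single J 1)) J'
    simp only [LinearMap.comp_apply, Fintype.linearCombination_apply_single, one_smul,
      LinearMap.id_apply] at h1
    rw [pi_eq_sum_univ' (baseChangeMap F L (fun k a =>
      algebraMap R L (MvPolynomial.X (J k, a)))), map_sum, Finset.sum_apply] at h1
    simp only [map_smul, Pi.smul_apply, smul_eq_mul] at h1
    rw [map_sum]
    have h2 : ∀ w, algebraMap R L (p J w * B (w, J')) = algebraMap R L r *
        (baseChangeMap F L (fun k a => algebraMap R L (MvPolynomial.X (J k, a))) w *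
          g (Pi.single w 1) J') := by
      intro w
      rw [map_mul, hB, hp, Algebra.smul_def]
      ring
    simp_rw [h2]
    rw [← Finset.mul_sum]
    rw [h1]
    by_cases hJ : J = J'
    · subst hJ
      simp
    · simp [hJ, Ne.symm hJ]
  obtain ⟨x, hx⟩ : ∃ x, MvPolynomial.eval x (r : R) ≠ 0 := by
    by_contra! h0
    exact nonZeroDivisors.coe_ne_zero r (MvPolynomial.funext fun x => by rw [h0 x, map_zero])
  apply h fun j => ∑ a, x (j, a) • Module.Free.chooseBasis K V a
  rw [Fintype.linearIndependent_iff]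
  intro c hc J'
  have hcoord : ∀ w, ∑ J, c J * MvPolynomial.eval x (p J w) = 0 := by
    intro w
    have := congrArg ((Module.Free.chooseBasis K W).coord w) hc
    rw [map_sum, map_zero] at this
    rw [← this]
    refine Finset.sum_congr rfl fun J _ => ?_
    rw [map_smul, coord_apply_eq_coordEval F (fun k a => x (J k, a)), smul_eq_mul]
    congr 1
    have := map_coordEval F (MvPolynomial.aeval x) (fun k a => MvPolynomial.X (J k, a)) w
    simpa [MvPolynomial.aeval_eq_eval] using this
  have hsum : ∑ w, (∑ J, c J * MvPolynomial.eval x (p J w)) * MvPolynomial.eval x (B (w, J')) =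
      c J' * MvPolynomial.eval x (r : R) := by
    simp_rw [Finset.sum_mul]
    rw [Finset.sum_comm]
    simp_rw [mul_assoc, ← map_mul, ← Finset.mul_sum, ← map_sum, hmul]
    rw [Finset.sum_eq_single J']
    · simp
    · intro J _ hJ
      simp [hJ]
    · simp
  simp only [hcoord, zero_mul, Finset.sum_const_zero] at hsum
  exact (mul_eq_zero.1 hsum.symm).resolve_right hx

/-! ### Heights and transcendence bases -/

/-- If the `a i` with `i ∈ T` are algebraically independent, the kernel meets no nonzero polynomial in
the variables `T`, so it survives in the polynomial ring in the variables `Tᶜ` over the fraction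
field of `K[T]`, whose dimension is `|Tᶜ|`. -/
lemma height_ker_aeval_le {K L σ : Type} [Field K] [Field L] [Algebra K L] [Finite σ]
    (a : σ → L) (T : Set σ) (hT : AlgebraicIndependent K (fun i : T => a i)) :
    (RingHom.ker (MvPolynomial.aeval a : MvPolynomial σ K →ₐ[K] L)).height ≤
      (Nat.card (Tᶜ : Set σ) : ℕ∞) := by
  classical
  set P := RingHom.ker (MvPolynomial.aeval a : MvPolynomial σ K →ₐ[K] L) with hP
  have hPp : P.IsPrime := RingHom.ker_isPrime _
  let e : MvPolynomial σ K ≃ₐ[K] MvPolynomial (Tᶜ : Set σ) (MvPolynomial T K) :=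
    (MvPolynomial.renameEquiv K ((Equiv.sumComm _ _).trans (Equiv.Set.sumCompl T)).symm).trans
      (MvPolynomial.sumAlgEquiv K _ _)
  have he : ∀ q : MvPolynomial T K, e (MvPolynomial.rename Subtype.val q) = MvPolynomial.C q := by
    have : (e.toAlgHom.comp (MvPolynomial.rename Subtype.val)) =
        (IsScalarTower.toAlgHom K (MvPolynomial T K)
          (MvPolynomial (Tᶜ : Set σ) (MvPolynomial T K))) := by
      ext i : 1
      simp [e, MvPolynomial.algebraMap_eq]
    intro q
    exact DFunLike.congr_fun this q
  let P' : Ideal (MvPolynomial (Tᶜ : Set σ) (MvPolynomial T K)) :=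
    P.comap (e.symm.toRingEquiv : _ ≃+* _)
  have hP' : P'.IsPrime := Ideal.comap_isPrime _ _
  have hh : P'.height = P.height := RingEquiv.height_comap e.symm.toRingEquiv P
  let M : Submonoid (MvPolynomial (Tᶜ : Set σ) (MvPolynomial T K)) :=
    (nonZeroDivisors (MvPolynomial T K)).map MvPolynomial.C
  let Q := MvPolynomial (Tᶜ : Set σ) (FractionRing (MvPolynomial T K))
  have hdisj : Disjoint (M : Set (MvPolynomial (Tᶜ : Set σ) (MvPolynomial T K))) (P' : Set _) := by
    rw [Set.disjoint_left]
    rintro _ ⟨q, hq, rfl⟩ hqP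
    have hqP : MvPolynomial.aeval a (e.symm (MvPolynomial.C q)) = 0 := hqP
    rw [← he q, AlgEquiv.symm_apply_apply, MvPolynomial.aeval_rename] at hqP
    have : q = 0 := hT (by rw [map_zero]; exact hqP)
    exact nonZeroDivisors.ne_zero hq this
  let _ : Algebra (MvPolynomial (Tᶜ : Set σ) (MvPolynomial T K)) Q :=
    MvPolynomial.algebraMvPolynomial
  have : IsLocalization M Q := MvPolynomial.isLocalization _ _
  have h1 := IsLocalization.height_map_of_disjoint (S := Q) M P' hdisj
  have hprime : (P'.map (algebraMap _ Q)).IsPrime :=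
    IsLocalization.isPrime_of_isPrime_disjoint M Q P' hP' hdisj
  have h2 := Ideal.height_le_ringKrullDim_of_ne_top hprime.ne_top
  rw [h1, hh, MvPolynomial.ringKrullDim_of_isNoetherianRing, ringKrullDim_eq_zero_of_field,
    zero_add] at h2
  exact_mod_cast h2

/-- A generating family of a field extension contains a transcendence basis. -/
lemma exists_transcendenceBasis_index {K L α : Type} [Field K] [Field L] [Algebra K L]
    (y : α → L) (hy : IntermediateField.adjoin K (Set.range y) = ⊤) :
    ∃ T : Set α, IsTranscendenceBasis K (fun i : T => y i) := by
  have halg : Algebra.IsAlgebraic (Algebra.adjoin K (Set.range y)) L := by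
    refine ⟨fun x => ?_⟩
    obtain ⟨r, hr, s, hs, rfl⟩ := IntermediateField.mem_adjoin_iff_div.1
      (hy ▸ IntermediateField.mem_top : x ∈ IntermediateField.adjoin K (Set.range y))
    rw [div_eq_mul_inv]
    exact (isAlgebraic_algebraMap (⟨r, hr⟩ : Algebra.adjoin K (Set.range y))).mul
      (isAlgebraic_algebraMap (⟨s, hs⟩ : Algebra.adjoin K (Set.range y))).inv
  obtain ⟨t, ht, hbt⟩ := exists_isTranscendenceBasis_subset (R := K) (Set.range y)
  choose f hf using ht
  let f' : t → α := fun b => f b.2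
  have hf' : ∀ b, y (f' b) = b := fun b => hf b.2
  have hinj : Function.Injective f' := fun b b' h => Subtype.ext (by rw [← hf', ← hf', h])
  refine ⟨Set.range f', ?_⟩
  have := hbt
  rw [← isTranscendenceBasis_equiv (Equiv.ofInjective f' hinj)]
  convert hbt using 1
  ext b
  exact hf' b

/-! ### Specializing the generic relation -/

/-- A `k`-linear retraction `φ` acts on a product having at most one factor outside `k` by acting on
that factor. -/
lemma retraction_prod {K L : Type} [Field K] [Field L] [Algebra K L] (k : IntermediateField K L)
    (φ : L →ₗ[k] k) (hφ : ∀ z : k, φ z = z) {d : ℕ} (r : L) (hr : r ∈ k) (z : Fin d → L)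
    (P : Fin d → Prop) (hP : ∀ l l', P l → P l' → l = l') [DecidablePred P]
    (hz : ∀ l, ¬ P l → z l ∈ k) :
    (φ (r * ∏ l, z l) : L) = r * ∏ l, if P l then (φ (z l) : L) else z l := by
  have hmul : ∀ s ∈ k, ∀ t, (φ (s * t) : L) = s * φ t := by
    intro s hs t
    have := φ.map_smul ⟨s, hs⟩ t
    rw [← Subtype.coe_inj] at this
    simpa [Algebra.smul_def] using this
  rw [hmul r hr]
  congr 1
  by_cases h : ∃ l₀, P l₀
  · obtain ⟨l₀, hl₀⟩ := h
    have hne : ∀ l ∈ Finset.univ.erase l₀, ¬ P l := fun l hl hPl =>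
      (Finset.mem_erase.1 hl).1 (hP _ _ hPl hl₀)
    rw [← Finset.prod_erase_mul _ _ (Finset.mem_univ l₀),
      ← Finset.prod_erase_mul _ (fun l => if P l then (φ (z l) : L) else z l)
        (Finset.mem_univ l₀), hmul _ (prod_mem fun l hl => hz l (hne l hl)), if_pos hl₀]
    congr 1
    exact Finset.prod_congr rfl fun l hl => by rw [if_neg (hne l hl)]
  · push Not at h
    have hmem : ∏ l, z l ∈ k := prod_mem fun l _ => hz l (h l)
    have := hφ ⟨_, hmem⟩
    simp only at this
    rw [this]
    change ∏ l, z l = _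
    exact Finset.prod_congr rfl fun l _ => by rw [if_neg (h l)]

/-- A partial sum is affine in the `i`-th vector with coefficients in `k`, so `φ` can be applied to
that vector alone. -/
lemma retraction_partialSum {K V W L : Type} [Field K] [AddCommGroup V] [Module K V]
    [FiniteDimensional K V] [AddCommGroup W] [Module K W] [FiniteDimensional K W] {d n : ℕ}
    (F : MultilinearMap K (fun _ : Fin d => V) W) [Field L] [Algebra K L]
    (k : IntermediateField K L) (φ : L →ₗ[k] k) (hφ : ∀ z : k, φ z = z)
    (c : (Fin d ↪o Fin n) → L) (hc : ∀ J, c J ∈ k) (S : Finset (Fin n)) (i : Fin n)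
    (u : Fin n → Module.Free.ChooseBasisIndex K V → L) (hu : ∀ j, j ≠ i → ∀ a, u j a ∈ k)
    (w : Module.Free.ChooseBasisIndex K W) :
    (φ (partialSum (baseChangeMap F L) c S u w) : L) =
      partialSum (baseChangeMap F L) c S (Function.update u i fun a => (φ (u i a) : L)) w := by
  classical
  unfold partialSum
  rw [Finset.sum_apply, Finset.sum_apply, map_sum, AddSubmonoidClass.coe_finsetSum]
  refine Finset.sum_congr rfl fun J _ => ?_
  split_ifs with hJ
  · simp only [Pi.smul_apply, smul_eq_mul, baseChangeMap_apply, coordEval]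
    rw [Finset.mul_sum, Finset.mul_sum, map_sum, AddSubmonoidClass.coe_finsetSum]
    refine Finset.sum_congr rfl fun g _ => ?_
    rw [← mul_assoc, ← mul_assoc, retraction_prod k φ hφ _ (mul_mem (hc J)
      (k.algebraMap_mem _)) _ (fun l => J l = i) (fun l l' h h' => J.injective (h.trans h'.symm))
      (fun l hl => hu _ hl _)]
    congr 1
    refine Finset.prod_congr rfl fun l _ => ?_
    split_ifs with h
    · rw [h, Function.update_self]
    · rw [Function.update_of_ne h]
  · simp

/-- The elements `c_J`, `J ≠ I`, and `u_{j,a}`, as one family. The coefficient `c_I` is left out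
because it is normalized to `1`. -/
def generators {L ι : Type} [Field L] {d n : ℕ} (c : (Fin d ↪o Fin n) → L) (I : Fin d ↪o Fin n)
    (u : Fin n → ι → L) : {J : Fin d ↪o Fin n // J ≠ I} ⊕ (Fin n × ι) → L :=
  Sum.elim (fun J => c J.1) (fun z => u z.1 z.2)

/-- Replacing `u_i` by `u_i - φ(u_i)`, with `φ` a linear retraction of `L` onto the subfield generated
by `c` and the other vectors, keeps `L` generated by `c` and `u`, since `φ(u_i)` lies in that
subfield. -/
lemma exists_zero_insert {K V W L : Type} [Field K] [AddCommGroup V] [Module K V]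
    [FiniteDimensional K V] [AddCommGroup W] [Module K W] [FiniteDimensional K W] {d n : ℕ}
    (F : MultilinearMap K (fun _ : Fin d => V) W) [Field L] [Algebra K L]
    (c : (Fin d ↪o Fin n) → L) (I : Fin d ↪o Fin n) (hcI : c I = 1) (S : Finset (Fin n))
    (i : Fin n) (u : Fin n → Module.Free.ChooseBasisIndex K V → L)
    (hu : partialSum (baseChangeMap F L) c S u = 0)
    (hgen : IntermediateField.adjoin K (Set.range (generators c I u)) = ⊤) :
    ∃ u' : Fin n → Module.Free.ChooseBasisIndex K V → L,
      partialSum (baseChangeMap F L) c (insert i S) u' = 0 ∧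
      IntermediateField.adjoin K (Set.range (generators c I u')) = ⊤ := by
  let k : IntermediateField K L := IntermediateField.adjoin K
    (Set.range c ∪ {z | ∃ j, j ≠ i ∧ ∃ a, z = u j a})
  have hck : ∀ J, c J ∈ k := fun J => IntermediateField.subset_adjoin _ _ (.inl ⟨J, rfl⟩)
  have huk : ∀ j, j ≠ i → ∀ a, u j a ∈ k := fun j hj a =>
    IntermediateField.subset_adjoin _ _ (.inr ⟨j, hj, a, rfl⟩)
  obtain ⟨φ, hφ⟩ := LinearMap.exists_leftInverse_of_injective (Algebra.linearMap k L)
    (LinearMap.ker_eq_bot.2 (algebraMap k L).injective)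
  have hφ' : ∀ z : k, φ z = z := fun z => LinearMap.congr_fun hφ z
  let p : Module.Free.ChooseBasisIndex K V → L := fun a => φ (u i a)
  have hp : partialSum (baseChangeMap F L) c S (Function.update u i p) = 0 := by
    ext w
    rw [← retraction_partialSum F k φ hφ' c hck S i u huk w, hu]
    simp
  refine ⟨Function.update u i (u i - p), ?_, ?_⟩
  · rw [partialSum_insert_sub, hp, Function.update_eq_self, hu, sub_zero]
  · rw [eq_top_iff, ← hgen, IntermediateField.adjoin_le_iff]
    set k' := IntermediateField.adjoin K
      (Set.range (generators c I (Function.update u i (u i - p)))) with hk'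
    have hmem : ∀ z, generators c I (Function.update u i (u i - p)) z ∈ k' := fun z =>
      IntermediateField.subset_adjoin _ _ ⟨z, rfl⟩
    have hc' : ∀ J, c J ∈ k' := by
      intro J
      by_cases hJ : J = I
      · rw [hJ, hcI]
        exact one_mem _
      · exact hmem (.inl ⟨J, hJ⟩)
    have hu' : ∀ j, j ≠ i → ∀ a, u j a ∈ k' := by
      intro j hj a
      have := hmem (.inr (j, a))
      simpa [generators, hj] using this
    have hkk' : k ≤ k' := by
      rw [IntermediateField.adjoin_le_iff]
      rintro _ (⟨J, rfl⟩ | ⟨j, hj, a, rfl⟩)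
      exacts [hc' J, hu' j hj a]
    rintro _ ⟨J | ⟨j, a⟩, rfl⟩
    · exact hc' J
    · by_cases hj : j = i
      · subst hj
        have h1 := hmem (.inr (j, a))
        simp only [generators, Sum.elim_inr, Function.update_self, Pi.sub_apply] at h1
        have h2 := add_mem h1 (hkk' (φ (u j a)).2)
        simpa [generators, p] using h2
      · exact hu' j hj a

lemma isTranscendenceBasis_fractionRing (K σ : Type) [Field K] :
    IsTranscendenceBasis K (fun z : σ =>
      algebraMap (MvPolynomial σ K) (FractionRing (MvPolynomial σ K)) (MvPolynomial.X z)) := by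
  have : Algebra.IsAlgebraic (MvPolynomial σ K) (FractionRing (MvPolynomial σ K)) :=
    IsLocalization.isAlgebraic _ (nonZeroDivisors (MvPolynomial σ K))
  exact (IsTranscendenceBasis.mvPolynomial σ K).algebraMap_comp

/-- Starting from the generic point of `V^n`, one reaches a zero `u_I` of `F` over `L` whose
prime ideal in `K[x]` has height at most `C(n, d) - 1`. -/
lemma geomRank_lt {K V W : Type} [Field K] [Infinite K] [AddCommGroup V] [Module K V]
    [FiniteDimensional K V] [AddCommGroup W] [Module K W] [FiniteDimensional K W] {d n : ℕ}
    (F : MultilinearMap K (fun _ : Fin d => V) W)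
    (h : ∀ u : Fin n → V,
      ¬ LinearIndependent K fun J : Fin d ↪o Fin n => F (fun k => u (J k))) :
    mapGeomRank F < (n.choose d : ℕ∞) := by
  classical
  let ι := Module.Free.ChooseBasisIndex K V
  let R := MvPolynomial (Fin n × ι) K
  let L := FractionRing R
  let u₀ : Fin n → ι → L := fun j a => algebraMap R L (MvPolynomial.X (j, a))
  have hcard : Fintype.card (Fin d ↪o Fin n) = n.choose d := by
    rw [← Nat.card_eq_fintype_card, Nat.card_congr Set.powersetCard.ofFinEmbEquiv,
      Set.powersetCard.card, Nat.card_fin]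
  -- The relation is scaled so that one coefficient equals `1`, which saves one generator.
  obtain ⟨c, I, hcI, hc⟩ : ∃ (c : (Fin d ↪o Fin n) → L) (I : Fin d ↪o Fin n), c I = 1 ∧
      partialSum (baseChangeMap F L) c ∅ u₀ = 0 := by
    have := exists_generic_relation F h L
    rw [Fintype.not_linearIndependent_iff] at this
    obtain ⟨c, hc, I, hI⟩ := this
    refine ⟨fun J => (c I)⁻¹ * c J, I, inv_mul_cancel₀ hI, ?_⟩
    have h2 := congrArg (fun z => (c I)⁻¹ • z) hc
    simp only [Finset.smul_sum, smul_smul, smul_zero] at h2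
    simpa [partialSum] using h2
  have hgen₀ : IntermediateField.adjoin K (Set.range (generators c I u₀)) = ⊤ := by
    rw [eq_top_iff]
    intro x _
    obtain ⟨r, s, -, rfl⟩ := IsFractionRing.div_surjective (A := R) x
    have hR : ∀ q : R, algebraMap R L q ∈
        IntermediateField.adjoin K (Set.range (generators c I u₀)) := by
      intro q
      induction q using MvPolynomial.induction_on with
      | C b =>
        have : algebraMap R L (MvPolynomial.C b) = algebraMap K L b :=
          (IsScalarTower.algebraMap_apply K R L b).symm
        rw [this]
        exact IntermediateField.algebraMap_mem _ b
      | add p q hp hq => rw [map_add]; exact add_mem hp hq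
      | mul_X p z hp =>
        rw [map_mul]
        exact mul_mem hp (IntermediateField.subset_adjoin _ _ ⟨.inr z, rfl⟩)
    exact div_mem (hR r) (hR s)
  have hstep : ∀ S : Finset (Fin n), ∃ u : Fin n → ι → L,
      partialSum (baseChangeMap F L) c S u = 0 ∧
      IntermediateField.adjoin K (Set.range (generators c I u)) = ⊤ := by
    intro S
    induction S using Finset.induction_on with
    | empty => exact ⟨u₀, hc, hgen₀⟩
    | insert i S _ ih =>
      obtain ⟨u, hu, hgen⟩ := ih
      exact exists_zero_insert F c I hcI S i u hu hgen
  obtain ⟨u, hu, hgen⟩ := hstep (Finset.univ.image I)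
  rw [partialSum_image, hcI, one_smul] at hu
  obtain ⟨T, hT⟩ := exists_transcendenceBasis_index _ hgen
  -- `L` has transcendence degree `n * dim V`, so `T` misses only `C(n, d) - 1` generators.
  have hTcard : Nat.card T = Nat.card (Fin n × ι) := by
    have hX : IsTranscendenceBasis K (fun z : Fin n × ι => algebraMap R L (MvPolynomial.X z)) := 
      isTranscendenceBasis_fractionRing K (Fin n × ι)
    have := hT.cardinalMk_eq hX
    exact congrArg Cardinal.toNat this
  have hTc : Nat.card (Tᶜ : Set _) + 1 = n.choose d := by
    have h1 : Nat.card T + Nat.card (Tᶜ : Set _) =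
        Nat.card ({J : Fin d ↪o Fin n // J ≠ I} ⊕ (Fin n × ι)) := by
      rw [← Nat.card_sum, Nat.card_congr (Equiv.Set.sumCompl T)]
    have h2 : Nat.card {J : Fin d ↪o Fin n // J ≠ I} + 1 = n.choose d := by
      rw [Nat.card_eq_fintype_card, Fintype.card_subtype_compl, Fintype.card_subtype_eq, hcard]
      have : 0 < Fintype.card (Fin d ↪o Fin n) := Fintype.card_pos_iff.2 ⟨I⟩
      omega
    rw [Nat.card_sum] at h1
    omega
  let a : (Σ _ : Fin d, ι) → L := fun z => u (I z.1) z.2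
  let ψ : (Σ _ : Fin d, ι) → {J : Fin d ↪o Fin n // J ≠ I} ⊕ (Fin n × ι) :=
    fun z => .inr (I z.1, z.2)
  have hψ : Function.Injective ψ := by
    rintro ⟨k, b⟩ ⟨k', b'⟩ hz
    simp only [ψ, Sum.inr.injEq, Prod.mk.injEq, EmbeddingLike.apply_eq_iff_eq] at hz
    obtain ⟨rfl, rfl⟩ := hz
    rfl
  have hindep : AlgebraicIndependent K (fun z : (ψ ⁻¹' T) => a z) :=
    hT.1.comp (fun z : (ψ ⁻¹' T) => (⟨ψ z.1, z.2⟩ : T)) (fun z z' hz =>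
      Subtype.ext (hψ (congrArg Subtype.val hz)))
  have hheight := height_ker_aeval_le a (ψ ⁻¹' T) hindep
  have hle : Nat.card ((ψ ⁻¹' T)ᶜ : Set _) ≤ Nat.card (Tᶜ : Set _) :=
    Nat.card_le_card_of_injective (fun z => ⟨ψ z.1, z.2⟩) (fun z z' hz =>
      Subtype.ext (hψ (congrArg Subtype.val hz)))
  set P := RingHom.ker (MvPolynomial.aeval a : MvPolynomial (Σ _ : Fin d, ι) K →ₐ[K] L) with hP
  have hPp : P.IsPrime := RingHom.ker_isPrime _
  have hrank : mapGeomRank F ≤ P.height := by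
    unfold mapGeomRank idealHeight
    have := PrimeSpectrum.height_eq_orderHeight ⟨P, hPp⟩
    rw [this]
    refine iInf₂_le (⟨P, hPp⟩ : PrimeSpectrum _) ?_
    simp only [Set.mem_ofPred_eq]
    rw [Ideal.span_le]
    rintro _ ⟨w, rfl⟩
    have hw := congrFun hu w
    rw [baseChangeMap_apply] at hw
    simp only [hP, SetLike.mem_coe, RingHom.mem_ker, map_sum, map_mul, map_prod,
      MvPolynomial.aeval_X, MvPolynomial.algHom_C]
    exact hw
  refine (hrank.trans hheight).trans_lt ?_
  rw [← hTc]
  exact_mod_cast Nat.lt_succ_of_le hle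

/-- **Bounds on the completeness index, alternating case.**  Let `F : V^d → W` be a nonzero
alternating multilinear map between finite-dimensional vector spaces over a field `K`.  If `K`
is infinite then `GR(T_F) < C(β_Λ(F)+1, d)`, and if `K` is finite with `q` elements then
`AR(T_F) < d + C(β_Λ(F)+1, d) + ⌈C(β_Λ(F)+1, d)·(d-1)/(q-1)⌉`. -/
theorem completeness_index_bound_alternating {K : Type} [Field K] {d : ℕ} (hd : 0 < d)
    (V W : Type) [AddCommGroup V] [Module K V] [FiniteDimensional K V]
    [AddCommGroup W] [Module K W] [FiniteDimensional K W]
    (F : AlternatingMap K V W (Fin d)) (hF : F ≠ 0) :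
    (Infinite K →
      mapGeomRank F.toMultilinearMap < ((Nat.choose (altCompIndex F + 1) d : ℕ) : ℕ∞)) ∧
    (Finite K → mapAnalyticRank F.toMultilinearMap <
      (d : ℝ) + Nat.choose (altCompIndex F + 1) d +
        ⌈((Nat.choose (altCompIndex F + 1) d * (d - 1) : ℕ) : ℝ) /
          ((Nat.card K : ℝ) - 1)⌉) := by
  have hn : d ≤ altCompIndex F + 1 := (degree_le_altCompIndex hd F hF).trans (Nat.le_succ _)
  have hrel := exists_relation hd F hn
  refine ⟨fun _ => geomRank_lt F.toMultilinearMap hrel, fun _ => ?_⟩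
  have h1 := analyticRank_lt F.toMultilinearMap hrel
  have hq : (1 : ℝ) < Nat.card K := by exact_mod_cast Finite.one_lt_card
  have h2 : (0 : ℝ) ≤ (⌈((Nat.choose (altCompIndex F + 1) d * (d - 1) : ℕ) : ℝ) /
          ((Nat.card K : ℝ) - 1)⌉ : ℤ) := by
    have hq' : (0 : ℝ) ≤ (Nat.card K : ℝ) - 1 := by linarith
    exact Int.cast_nonneg (Int.ceil_nonneg (div_nonneg (Nat.cast_nonneg _) hq'))
  have h3 : (0 : ℝ) ≤ d := Nat.cast_nonneg d
  linarith
end
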